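/- Under Assumption 1, the law P_{XZY} of (Ẍ,Y) equals the measure P_{Ẍ⊗Y|Z} on 𝒳̈ × 𝒴 if and only if, for every (t^{(1)},t^{(2)}) ∈ 𝒳̈ × 𝒴, the witness function satisfies Δ(t^{(1)},t^{(2)}) = 0; in particular, since k is characteristic, P_{XZY} ≠ P_{Ẍ⊗Y|Z} implies that Δ is not identically zero. -/

import Mathlib

open MeasureTheory ProbabilityTheory Filter Topology Asymptotics
open scoped RealInnerProductSpace

noncomputable section

namespace CIPaper

/-- A positive definite kernel. -/
def PosDefKernel {D : Type*} (k : D → D → ℝ) : Prop :=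
  ∀ (n : ℕ) (x : Fin n → D) (c : Fin n → ℝ),
    0 ≤ ∑ i : Fin n, ∑ j : Fin n, c i * c j * k (x i) (x j)

/-- The mean embedding of `ν` with respect to the kernel `k`. -/
def meanEmbed {D : Type*} [MeasurableSpace D] (k : D → D → ℝ) (ν : Measure D) (t : D) : ℝ :=
  ∫ x, k x t ∂ν

/-- A kernel is characteristic if the mean embedding is injective on probability measures. -/
def Characteristic {D : Type*} [MeasurableSpace D] (k : D → D → ℝ) : Prop :=
  ∀ P Q : Measure D, IsProbabilityMeasure P → IsProbabilityMeasure Q →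
    (∀ t, meanEmbed k P t = meanEmbed k Q t) → P = Q

def BoundedKernel {D : Type*} (k : D → D → ℝ) : Prop := ∃ C, ∀ x y, |k x y| ≤ C

/-- Assumption 1 of the paper, for the tensor product kernel built from `kX` and `kY` :
the tensor kernel is positive definite, characteristic, bounded, continuous and analytic. -/
structure Assumption1 {DX DY : Type*} [MeasurableSpace DX] [MeasurableSpace DY]
    [NormedAddCommGroup DX] [NormedSpace ℝ DX] [NormedAddCommGroup DY] [NormedSpace ℝ DY]
    (kX : DX → DX → ℝ) (kY : DY → DY → ℝ) : Prop where
  posdef : PosDefKernel fun p q : DX × DY => kX p.1 q.1 * kY p.2 q.2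
  charac : Characteristic fun p q : DX × DY => kX p.1 q.1 * kY p.2 q.2
  bounded : BoundedKernel fun p q : DX × DY => kX p.1 q.1 * kY p.2 q.2
  continuous : Continuous fun pq : (DX × DY) × (DX × DY) => kX pq.1.1 pq.2.1 * kY pq.1.2 pq.2.2
  analytic : ∀ p : DX × DY, AnalyticOnNhd ℝ (fun q : DX × DY => kX p.1 q.1 * kY p.2 q.2) Set.univ

/-- The random metric `d_{p,J}` between two measures, with locations `t`. -/
def dpJ {D : Type*} [MeasurableSpace D] (k : D → D → ℝ) (p : ℕ) {J : ℕ}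
    (t : Fin J → D) (P Q : Measure D) : ℝ :=
  ((J : ℝ)⁻¹ * ∑ j : Fin J, |meanEmbed k P (t j) - meanEmbed k Q (t j)| ^ p) ^ ((p : ℝ)⁻¹)

/-- `P` is the measure `P_{Ẍ⊗Y|Z}` of the paper : a Borel probability measure with
`P(A×B) = E[E[1_A(Ẍ)|Z]·E[1_B(Y)|Z]]` for all measurable `A`, `B`. -/
def IsCondProdMeasure {Ω : Type*} [MeasurableSpace Ω] (μ : Measure Ω)
    {DX DZ DY : Type*} [MeasurableSpace DX] [MeasurableSpace DZ] [MeasurableSpace DY]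
    (X : Ω → DX) (Z : Ω → DZ) (Y : Ω → DY) (P : Measure ((DX × DZ) × DY)) : Prop :=
  IsProbabilityMeasure P ∧
    ∀ (A : Set (DX × DZ)) (B : Set DY), MeasurableSet A → MeasurableSet B →
      (P (A ×ˢ B)).toReal =
        ∫ ω, ((μ[fun ω' => A.indicator (fun _ => (1 : ℝ)) (X ω', Z ω') |
                MeasurableSpace.comap Z inferInstance]) ω)
            * ((μ[fun ω' => B.indicator (fun _ => (1 : ℝ)) (Y ω') |
                MeasurableSpace.comap Z inferInstance]) ω) ∂μ

/-- The witness function `Δ`. -/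
def witness {Ω : Type*} [MeasurableSpace Ω] (μ : Measure Ω)
    {DX DZ DY : Type*} [MeasurableSpace DZ]
    (kX : DX × DZ → DX × DZ → ℝ) (kY : DY → DY → ℝ)
    (X : Ω → DX) (Z : Ω → DZ) (Y : Ω → DY) (t1 : DX × DZ) (t2 : DY) : ℝ :=
  ∫ ω, (kX t1 (X ω, Z ω) -
          (μ[fun ω' => kX t1 (X ω', Z ω') | MeasurableSpace.comap Z inferInstance]) ω)
      * (kY t2 (Y ω) -
          (μ[fun ω' => kY t2 (Y ω') | MeasurableSpace.comap Z inferInstance]) ω) ∂μ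

/-- Cramér–Wold characterization: `ν` is the centered Gaussian measure on `ℝ^J` with
covariance matrix `S`. -/
def IsCenteredGaussian {J : ℕ} (S : Matrix (Fin J) (Fin J) ℝ) (ν : Measure (Fin J → ℝ)) : Prop :=
  IsProbabilityMeasure ν ∧
    ∀ a : Fin J → ℝ,
      ν.map (fun v => ∑ j, a j * v j) =
        gaussianReal 0 (Real.toNNReal (∑ i, ∑ j, a i * S i j * a j))

/-- Convergence in distribution (weak convergence of the image laws). -/
def TendstoInDistribution {Ω : Type*} [MeasurableSpace Ω] (μ : Measure Ω) {E : Type*}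
    [TopologicalSpace E] [MeasurableSpace E] (W : ℕ → Ω → E) (ν : Measure E) : Prop :=
  ∀ f : BoundedContinuousFunction E ℝ,
    Tendsto (fun n : ℕ => ∫ ω, f (W n ω) ∂μ) atTop (𝓝 (∫ x, f x ∂ν))

/-- The one-sample statistic `u_i(j)` of the paper (oracle version), where `e1`, `e2` are
the conditional mean functions. -/
def uStat {Ω DX DZ DY : Type*} (kX : DX × DZ → DX × DZ → ℝ) (kY : DY → DY → ℝ)
    (e1 : DX × DZ → DZ → ℝ) (e2 : DY → DZ → ℝ)
    (xS : ℕ → Ω → DX) (zS : ℕ → Ω → DZ) (yS : ℕ → Ω → DY)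
    {J : ℕ} (t : Fin J → (DX × DZ) × DY) (i : ℕ) (j : Fin J) (ω : Ω) : ℝ :=
  (kX (t j).1 (xS i ω, zS i ω) - e1 (t j).1 (zS i ω)) *
    (kY (t j).2 (yS i ω) - e2 (t j).2 (zS i ω))

/-- `S_n`, the empirical mean of the `u_i`. -/
def SStat {Ω DX DZ DY : Type*} (kX : DX × DZ → DX × DZ → ℝ) (kY : DY → DY → ℝ)
    (e1 : DX × DZ → DZ → ℝ) (e2 : DY → DZ → ℝ)
    (xS : ℕ → Ω → DX) (zS : ℕ → Ω → DZ) (yS : ℕ → Ω → DY)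
    {J : ℕ} (t : Fin J → (DX × DZ) × DY) (n : ℕ) (ω : Ω) : Fin J → ℝ :=
  fun j => (n : ℝ)⁻¹ * ∑ i ∈ Finset.range n, uStat kX kY e1 e2 xS zS yS t i j ω

/-- The covariance matrix `Σ = E[u₁ u₁ᵀ]`. -/
def covMat {Ω DX DZ DY : Type*} [MeasurableSpace Ω] (μ : Measure Ω)
    (kX : DX × DZ → DX × DZ → ℝ) (kY : DY → DY → ℝ)
    (e1 : DX × DZ → DZ → ℝ) (e2 : DY → DZ → ℝ)
    (xS : ℕ → Ω → DX) (zS : ℕ → Ω → DZ) (yS : ℕ → Ω → DY)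
    {J : ℕ} (t : Fin J → (DX × DZ) × DY) : Matrix (Fin J) (Fin J) ℝ :=
  Matrix.of fun j j' =>
    ∫ ω, uStat kX kY e1 e2 xS zS yS t 0 j ω * uStat kX kY e1 e2 xS zS yS t 0 j' ω ∂μ

/-- The empirical covariance matrix `Σ̂_n` of the oracle `u_i`. -/
def covHat {Ω DX DZ DY : Type*} (kX : DX × DZ → DX × DZ → ℝ) (kY : DY → DY → ℝ)
    (e1 : DX × DZ → DZ → ℝ) (e2 : DY → DZ → ℝ)
    (xS : ℕ → Ω → DX) (zS : ℕ → Ω → DZ) (yS : ℕ → Ω → DY)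
    {J : ℕ} (t : Fin J → (DX × DZ) × DY) (n : ℕ) (ω : Ω) : Matrix (Fin J) (Fin J) ℝ :=
  Matrix.of fun j j' => (n : ℝ)⁻¹ * ∑ i ∈ Finset.range n,
    uStat kX kY e1 e2 xS zS yS t i j ω * uStat kX kY e1 e2 xS zS yS t i j' ω

/-- The regularized least squares estimator built from the first `r` samples `zs` with
targets `target`, kernel `kZ` and regularization parameter `lam`. -/
def rls {DZ : Type*} (kZ : DZ → DZ → ℝ) (zs : ℕ → DZ) (target : ℕ → ℝ)
    (r : ℕ) (lam : ℝ) (z : DZ) : ℝ :=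
  ∑ i : Fin r,
    (((Matrix.of fun i l : Fin r => kZ (zs i) (zs l)) +
        ((r : ℝ) * lam) • (1 : Matrix (Fin r) (Fin r) ℝ))⁻¹.mulVec
      fun i : Fin r => target i) i * kZ (zs i) z

/-- The statistic `ũ_{i,r}(j)` built from the RLS estimators. -/
def uTildeStat {Ω DX DZ DY : Type*} (kX : DX × DZ → DX × DZ → ℝ) (kY : DY → DY → ℝ)
    {J : ℕ} (kZ1 kZ2 : Fin J → DZ → DZ → ℝ)
    (xS : ℕ → Ω → DX) (zS : ℕ → Ω → DZ) (yS : ℕ → Ω → DY)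
    (t : Fin J → (DX × DZ) × DY) (r : ℕ) (lam : ℝ) (i : ℕ) (j : Fin J) (ω : Ω) : ℝ :=
  (kX (t j).1 (xS i ω, zS i ω) -
      rls (kZ1 j) (fun l => zS l ω) (fun l => kX (t j).1 (xS l ω, zS l ω)) r lam (zS i ω)) *
    (kY (t j).2 (yS i ω) -
      rls (kZ2 j) (fun l => zS l ω) (fun l => kY (t j).2 (yS l ω)) r lam (zS i ω))

/-- `S̃_{n,r}`. -/
def STilde {Ω DX DZ DY : Type*} (kX : DX × DZ → DX × DZ → ℝ) (kY : DY → DY → ℝ)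
    {J : ℕ} (kZ1 kZ2 : Fin J → DZ → DZ → ℝ)
    (xS : ℕ → Ω → DX) (zS : ℕ → Ω → DZ) (yS : ℕ → Ω → DY)
    (t : Fin J → (DX × DZ) × DY) (n r : ℕ) (lam : ℝ) (ω : Ω) : Fin J → ℝ :=
  fun j => (n : ℝ)⁻¹ * ∑ i ∈ Finset.range n,
    uTildeStat kX kY kZ1 kZ2 xS zS yS t r lam i j ω

/-- `Σ_{n,r}`, the empirical covariance matrix of the `ũ_{i,r}`. -/
def covTilde {Ω DX DZ DY : Type*} (kX : DX × DZ → DX × DZ → ℝ) (kY : DY → DY → ℝ)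
    {J : ℕ} (kZ1 kZ2 : Fin J → DZ → DZ → ℝ)
    (xS : ℕ → Ω → DX) (zS : ℕ → Ω → DZ) (yS : ℕ → Ω → DY)
    (t : Fin J → (DX × DZ) × DY) (n r : ℕ) (lam : ℝ) (ω : Ω) : Matrix (Fin J) (Fin J) ℝ :=
  Matrix.of fun j j' => (n : ℝ)⁻¹ * ∑ i ∈ Finset.range n,
    uTildeStat kX kY kZ1 kZ2 xS zS yS t r lam i j ω *
      uTildeStat kX kY kZ1 kZ2 xS zS yS t r lam i j' ω

/-- The positive semidefinite square root of a positive semidefinite matrix (the definition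
of `Matrix.PosSemidef.sqrt` in the older Mathlib, over `ℝ`). -/
def _root_.Matrix.PosSemidef.sqrt {n : Type*} [Fintype n] [DecidableEq n]
    {A : Matrix n n ℝ} (hA : A.PosSemidef) : Matrix n n ℝ :=
  (hA.1.eigenvectorUnitary : Matrix n n ℝ) * Matrix.diagonal (Real.sqrt ∘ hA.1.eigenvalues) *
    (star hA.1.eigenvectorUnitary : Matrix n n ℝ)

open scoped Classical in
/-- The inverse square root `M^{-1/2}` of a positive semidefinite matrix. -/
def invSqrtMat {J : ℕ} (M : Matrix (Fin J) (Fin J) ℝ) : Matrix (Fin J) (Fin J) ℝ :=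
  if h : M.PosSemidef then h.sqrt⁻¹ else 0

/-- The chi-square distribution with `J` degrees of freedom, realized as the law of the sum of
squares of `J` independent standard Gaussians. -/
def chiSq (J : ℕ) : Measure ℝ :=
  (Measure.pi fun _ : Fin J => gaussianReal 0 1).map fun v => ∑ j, v j ^ 2

/-- Assumption 2 of the paper for the operator `L` on `L²(P_Z)` :
`Tr((L + λ)⁻¹ L) ≤ Q λ^{-γ}`, the trace of the positive operator being computed in any
Hilbert basis. -/
def TraceAssumption {DZ : Type*} [MeasurableSpace DZ] (PZ : Measure DZ)
    (L : Lp ℝ 2 PZ →L[ℝ] Lp ℝ 2 PZ) (Q γ : ℝ) : Prop :=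
  ∀ lam : ℝ, 0 < lam → ∀ (ι : Type) (e : HilbertBasis ι ℝ (Lp ℝ 2 PZ)),
    ∑' i, ⟪(Ring.inverse (L + lam • (1 : Lp ℝ 2 PZ →L[ℝ] Lp ℝ 2 PZ)) * L) (e i), e i⟫ ≤
      Q * lam ^ (-γ)

/-- `P = L^s` : `P` is self-adjoint and acts as `c ^ s` on every eigenvector of `L`
(this determines the fractional power, via functional calculus, of a positive self-adjoint
compact operator). -/
def IsFracPower {H : Type*} [NormedAddCommGroup H] [InnerProductSpace ℝ H]
    (L : H →L[ℝ] H) (s : ℝ) (P : H →L[ℝ] H) : Prop :=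
  (∀ v w : H, ⟪P v, w⟫ = ⟪v, P w⟫) ∧
    ∀ (c : ℝ) (v : H), L v = c • v → P v = c ^ s • v

end CIPaper

open CIPaper

theorem CIPaper.PosDefKernel.fintype {D : Type*} {k : D → D → ℝ} (h : PosDefKernel k)
    {ι : Type*} [Fintype ι] (x : ι → D) (c : ι → ℝ) :
    0 ≤ ∑ i, ∑ j, c i * c j * k (x i) (x j) := by
  have e := (Fintype.equivFin ι).symm
  have := h _ (x ∘ e) (c ∘ e)
  simp only [Function.comp] at this
  rw [← e.sum_comp]
  convert this using 2 with i
  rw [← e.sum_comp]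

theorem CIPaper.integral_prod_nonneg_of_sum {E : Type*} [MeasurableSpace E] (M : Measure E)
    [IsProbabilityMeasure M] (g : E × E → ℝ) (hg : Measurable g) (C : ℝ) (hC : ∀ p, |g p| ≤ C)
    (hpos : ∀ (n : ℕ) (e : Fin n → E), 0 ≤ ∑ i, ∑ j, g (e i, e j)) :
    0 ≤ ∫ p, g p ∂(M.prod M) := by
  set b := ∫ p, g p ∂(M.prod M)
  set a := ∫ e, g (e, e) ∂M with ha
  have hint : ∀ {α : Type _} [MeasurableSpace α] (ν : Measure α) [IsProbabilityMeasure ν]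
      (φ : α → E × E), Measurable φ → Integrable (fun x => g (φ x)) ν := by
    intro α _ ν _ φ hφ
    exact Integrable.of_bound (hg.comp hφ).aestronglyMeasurable C
      (Eventually.of_forall fun x => by simpa using hC (φ x))
  have haC : a ≤ C := by
    have : a ≤ ∫ _, C ∂M := by
      apply integral_mono (hint M (fun e => (e, e)) (by fun_prop)) (integrable_const _)
      intro e
      exact (le_abs_self _).trans (hC _)
    simpa using this
  have key : ∀ n : ℕ, 0 ≤ (n : ℝ) * a + n * (n - 1) * b := by
    intro n
    let N : Measure (Fin n → E) := Measure.pi fun _ => M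
    have h1 : ∀ i j, ∫ e, g (e i, e j) ∂N = if i = j then a else b := by
      intro i j
      split_ifs with hij
      · subst hij
        have := (measurePreserving_eval (fun _ : Fin n => M) i)
        rw [ha, ← this.map_eq, integral_map this.measurable.aemeasurable]
        exact (hg.comp (by fun_prop : Measurable fun e : E => (e, e))).aestronglyMeasurable
      · have hI : iIndepFun (fun i (e : Fin n → E) => e i) N :=
          iIndepFun_pi (μ := fun _ : Fin n => M) (X := fun _ => id) (fun _ => aemeasurable_id)
        have hI2 := hI.indepFun hij
        rw [indepFun_iff_map_prod_eq_prod_map_map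
          (measurable_pi_apply i).aemeasurable (measurable_pi_apply j).aemeasurable] at hI2
        have hi := (measurePreserving_eval (fun _ : Fin n => M) i).map_eq
        have hj := (measurePreserving_eval (fun _ : Fin n => M) j).map_eq
        have : N.map (fun e => (e i, e j)) = M.prod M := by
          rw [hI2]; congr 1
        simp only [b]
        rw [← this, integral_map
          ((measurable_pi_apply i).prodMk (measurable_pi_apply j)).aemeasurable hg.aestronglyMeasurable]
    have h2 : 0 ≤ ∫ e, ∑ i, ∑ j, g (e i, e j) ∂N := integral_nonneg fun e => hpos n e
    rw [integral_finsetSum] at h2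
    · have h3 : ∀ i, ∫ e, ∑ j, g (e i, e j) ∂N = ∑ j, if i = j then a else b := by
        intro i
        rw [integral_finsetSum]
        · simp only [h1]
        · intro j _
          exact hint N (fun e => (e i, e j)) (by fun_prop)
      simp only [h3] at h2
      have h4 : ∀ i : Fin n, (∑ j, if i = j then a else b) = a + (n - 1) * b := by
        intro i
        have : ∀ j, (if i = j then a else b) = (if i = j then a - b else 0) + b := by
          intro j; split_ifs <;> ring
        simp only [this, Finset.sum_add_distrib]
        simp
        ring
      simp only [h4] at h2
      simp at h2
      linarith
    · intro i _
      apply integrable_finsetSum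
      intro j _
      exact hint N (fun e => (e i, e j)) (by fun_prop)
  by_contra hb
  push Not at hb
  obtain ⟨n, hn⟩ := exists_nat_gt (C / (-b) )
  have := key (n + 1)
  push_cast at this
  rw [div_lt_iff₀ (by linarith)] at hn
  have h5 : 0 ≤ ((n : ℝ) + 1) * (a + n * b) := by linarith
  have h6 := nonneg_of_mul_nonneg_right h5 (by positivity)
  linarith

theorem CIPaper.transpose_eq {D : Type*} [MeasurableSpace D] (k : D → D → ℝ)
    (hk : PosDefKernel k) (hm : Measurable fun p : D × D => k p.1 p.2) (C : ℝ)
    (hC : ∀ x y, |k x y| ≤ C) (P Q : Measure D) [IsProbabilityMeasure P] [IsProbabilityMeasure Q]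
    (h : ∀ t, ∫ x, k t x ∂P = ∫ x, k t x ∂Q) (t : D) :
    ∫ x, k x t ∂P = ∫ x, k x t ∂Q := by
  have hC0 : 0 ≤ C := (abs_nonneg _).trans (hC t t)
  have hint : ∀ {α : Type _} [MeasurableSpace α] (ν : Measure α) [IsProbabilityMeasure ν]
      (φ ψ : α → D), Measurable φ → Measurable ψ → Integrable (fun x => k (φ x) (ψ x)) ν := by
    intro α _ ν _ φ ψ hφ hψ
    exact Integrable.of_bound (hm.comp (hφ.prodMk hψ)).aestronglyMeasurable C
      (Eventually.of_forall fun x => by simpa using hC (φ x) (ψ x))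
  set Φ := ∫ x, k x t ∂P - ∫ x, k x t ∂Q with hΦ
  have key : ∀ ε : ℝ, 0 ≤ ε * Φ + ε ^ 2 * k t t := by
    intro ε
    let w : Fin 3 → ℝ := ![1, -1, ε]
    let pt : D × D → Fin 3 → D := fun e => ![e.1, e.2, t]
    let g : (D × D) × (D × D) → ℝ := fun p =>
      ∑ a, ∑ b, w a * w b * k (pt p.1 a) (pt p.2 b)
    have hpt : ∀ a, Measurable fun e => pt e a := by
      intro a
      fin_cases a <;> simp [pt] <;> fun_prop
    have hgm : Measurable g := by
      apply Finset.measurable_fun_sum; intro a _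
      apply Finset.measurable_fun_sum; intro b _
      exact (hm.comp (((hpt a).comp measurable_fst).prodMk
        ((hpt b).comp measurable_snd))).const_mul _
    have hgb : ∀ p, |g p| ≤ ∑ a, ∑ b, |w a * w b| * C := by
      intro p
      refine (Finset.abs_sum_le_sum_abs _ _).trans (Finset.sum_le_sum fun a _ => ?_)
      refine (Finset.abs_sum_le_sum_abs _ _).trans (Finset.sum_le_sum fun b _ => ?_)
      rw [abs_mul]
      exact mul_le_mul_of_nonneg_left (hC _ _) (abs_nonneg _)
    have hnn := integral_prod_nonneg_of_sum (P.prod Q) g hgm _ hgb (by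
      intro n e
      have := hk.fintype (ι := Fin n × Fin 3) (fun i => pt (e i.1) i.2) (fun i => w i.2)
      simp only [Fintype.sum_prod_type] at this
      convert this using 2 with i
      rw [Finset.sum_comm])
    rw [integral_prod _ (Integrable.of_bound hgm.aestronglyMeasurable _
      (Eventually.of_forall fun x => by simpa using hgb x))] at hnn
    have hP : ∀ s, ∫ e, k s e.1 ∂(P.prod Q) = ∫ x, k s x ∂P := fun s => by
      simpa using integral_fun_fst (μ := P) (ν := Q) (fun x => k s x)
    have hQ : ∀ s, ∫ e, k s e.2 ∂(P.prod Q) = ∫ x, k s x ∂Q := fun s => by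
      simpa using integral_fun_snd (μ := P) (ν := Q) (fun x => k s x)
    have hP' : ∀ s, ∫ e, k e.1 s ∂(P.prod Q) = ∫ x, k x s ∂P := fun s => by
      simpa using integral_fun_fst (μ := P) (ν := Q) (fun x => k x s)
    have hQ' : ∀ s, ∫ e, k e.2 s ∂(P.prod Q) = ∫ x, k x s ∂Q := fun s => by
      simpa using integral_fun_snd (μ := P) (ν := Q) (fun x => k x s)
    have hS : ∀ s, ∫ e, (k s e.1 - k s e.2 + ε * k s t) ∂(P.prod Q) = ε * k s t := by
      intro s
      rw [integral_add, integral_sub, hP, hQ, h s]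
      · simp
      · exact hint _ (fun _ => s) _ (by fun_prop) (by fun_prop)
      · exact hint _ (fun _ => s) _ (by fun_prop) (by fun_prop)
      · exact (hint _ (fun _ => s) _ (by fun_prop) (by fun_prop)).sub
          (hint _ (fun _ => s) _ (by fun_prop) (by fun_prop))
      · exact integrable_const _
    have hSi : ∀ s, Integrable (fun e : D × D => k s e.1 - k s e.2 + ε * k s t) (P.prod Q) := by
      intro s
      exact ((hint _ (fun _ => s) _ (by fun_prop) (by fun_prop)).sub
          (hint _ (fun _ => s) _ (by fun_prop) (by fun_prop))).add (integrable_const _)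
    have hin : ∀ e : D × D, ∫ e', g (e, e') ∂(P.prod Q)
        = ε * k e.1 t - ε * k e.2 t + ε ^ 2 * k t t := by
      intro e
      have : ∀ e' : D × D, g (e, e') = (k e.1 e'.1 - k e.1 e'.2 + ε * k e.1 t)
          - (k e.2 e'.1 - k e.2 e'.2 + ε * k e.2 t)
          + ε * (k t e'.1 - k t e'.2 + ε * k t t) := by
        intro e'
        simp [g, w, pt, Fin.sum_univ_three]
        ring
      simp only [this]
      rw [integral_add, integral_sub, integral_const_mul, hS, hS, hS]
      · ring
      · exact hSi _
      · exact hSi _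
      · exact (hSi _).sub (hSi _)
      · exact (hSi _).const_mul _
    simp only [hin] at hnn
    have i1 : Integrable (fun e : D × D => ε * k e.1 t) (P.prod Q) :=
      (hint _ _ (fun _ => t) (by fun_prop) (by fun_prop)).const_mul _
    have i2 : Integrable (fun e : D × D => ε * k e.2 t) (P.prod Q) :=
      (hint _ _ (fun _ => t) (by fun_prop) (by fun_prop)).const_mul _
    have i3 : Integrable (fun e : D × D => ε * k e.1 t - ε * k e.2 t) (P.prod Q) := i1.sub i2
    rw [integral_add i3 (integrable_const _), integral_sub i1 i2, integral_const_mul,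
      integral_const_mul, hP', hQ'] at hnn
    simp at hnn
    rw [hΦ]; linarith
  have hκ : 0 ≤ k t t := by
    have := hk 1 (fun _ => t) (fun _ => 1)
    simpa using this
  have : Φ = 0 := by
    have h1 := key (-Φ / (k t t + 1))
    have h2 : -Φ / (k t t + 1) * Φ + (-Φ / (k t t + 1)) ^ 2 * k t t
        = - (Φ ^ 2 / (k t t + 1) ^ 2) := by
      field_simp
      ring
    rw [h2] at h1
    have h3 : 0 ≤ Φ ^ 2 / (k t t + 1) ^ 2 := by positivity
    have h4 : Φ ^ 2 / (k t t + 1) ^ 2 = 0 := by linarith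
    have h5 : (k t t + 1) ^ 2 ≠ 0 := by positivity
    rw [div_eq_zero_iff] at h4
    simpa [h5] using h4
  linarith


theorem CIPaper.integral_condProd {Ω DX DZ DY : Type*} [mΩ : MeasurableSpace Ω]
    [StandardBorelSpace Ω] [Nonempty Ω]
    [MeasurableSpace DX] [MeasurableSpace DZ] [MeasurableSpace DY]
    (μ : Measure Ω) [IsProbabilityMeasure μ]
    (X : Ω → DX) (Z : Ω → DZ) (Y : Ω → DY)
    (hX : Measurable X) (hZ : Measurable Z) (hY : Measurable Y)
    (P2 : Measure ((DX × DZ) × DY)) (hP2 : IsCondProdMeasure μ X Z Y P2)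
    (f : DX × DZ → ℝ) (g : DY → ℝ) (hf : Measurable f) (hg : Measurable g)
    (A B : ℝ) (hA : ∀ x, |f x| ≤ A) (hB : ∀ y, |g y| ≤ B) :
    ∫ p, f p.1 * g p.2 ∂P2 =
      ∫ ω, (μ[fun ω' => f (X ω', Z ω') | MeasurableSpace.comap Z inferInstance]) ω *
        (μ[fun ω' => g (Y ω') | MeasurableSpace.comap Z inferInstance]) ω ∂μ := by
  have hm : MeasurableSpace.comap Z inferInstance ≤ mΩ := hZ.comap_le
  obtain ⟨hprob, hP2⟩ := hP2
  have hXZ : Measurable fun ω => (X ω, Z ω) := hX.prodMk hZ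
  let κ : Kernel Ω Ω := (condExpKernel μ (MeasurableSpace.comap Z inferInstance)).comap id
    (measurable_id'' hm)
  let η : Kernel Ω ((DX × DZ) × DY) := (κ.map fun ω => (X ω, Z ω)) ×ₖ (κ.map Y)
  have : IsMarkovKernel (κ.map fun ω => (X ω, Z ω)) := Kernel.IsMarkovKernel.map _ hXZ
  have : IsMarkovKernel (κ.map Y) := Kernel.IsMarkovKernel.map _ hY
  have key : ∀ (f : DX × DZ → ℝ) (g : DY → ℝ) (hf : Measurable f) (hg : Measurable g)
      (A B : ℝ) (hA : ∀ x, |f x| ≤ A) (hB : ∀ y, |g y| ≤ B),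
      ∫ p, f p.1 * g p.2 ∂(μ.bind η) =
      ∫ ω, (μ[fun ω' => f (X ω', Z ω') | MeasurableSpace.comap Z inferInstance]) ω *
        (μ[fun ω' => g (Y ω') | MeasurableSpace.comap Z inferInstance]) ω ∂μ := by
    intro f g hf hg A B hA hB
    have hfg : Measurable fun p : (DX × DZ) × DY => f p.1 * g p.2 := by fun_prop
    have hbind : (η ∘ₖ Kernel.const Unit μ) () = μ.bind η := by
      rw [Kernel.comp_apply, Kernel.const_apply]
    rw [← hbind, Kernel.integral_comp, Kernel.const_apply]
    · apply integral_congr_ae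
      have i1 : Integrable (fun ω' => f (X ω', Z ω')) μ :=
        Integrable.of_bound (hf.comp hXZ).aestronglyMeasurable A
          (Eventually.of_forall fun x => by simpa using hA _)
      have i2 : Integrable (fun ω' => g (Y ω')) μ :=
        Integrable.of_bound (hg.comp hY).aestronglyMeasurable B
          (Eventually.of_forall fun x => by simpa using hB _)
      filter_upwards [condExp_ae_eq_integral_condExpKernel hm i1,
        condExp_ae_eq_integral_condExpKernel hm i2] with ω h1 h2
      rw [h1, h2]
      simp only [η]
      rw [Kernel.prod_apply, integral_prod_mul f g, Kernel.map_apply _ hXZ, Kernel.map_apply _ hY,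
        integral_map hXZ.aemeasurable hf.aestronglyMeasurable,
        integral_map hY.aemeasurable hg.aestronglyMeasurable]
      rfl
    · refine Integrable.of_bound hfg.aestronglyMeasurable (A * B) (Eventually.of_forall fun p => ?_)
      simp only [norm_mul, Real.norm_eq_abs]
      exact mul_le_mul (hA _) (hB _) (abs_nonneg _) ((abs_nonneg _).trans (hA p.1))
  have heq : P2 = μ.bind η := by
    apply Measure.ext_prod
    intro s t hs ht
    have h1 := hP2 s t hs ht
    rw [← key (s.indicator fun _ => 1) (t.indicator fun _ => 1) (measurable_const.indicator hs)
      (measurable_const.indicator ht) 1 1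
      (fun x => by by_cases h : x ∈ s <;> simp [h])
      (fun x => by by_cases h : x ∈ t <;> simp [h])] at h1
    have h2 : ∀ p : (DX × DZ) × DY, s.indicator (fun _ => (1 : ℝ)) p.1 *
        t.indicator (fun _ => (1 : ℝ)) p.2 = (s ×ˢ t).indicator (fun _ => (1 : ℝ)) p := by
      intro p
      by_cases h : p.1 ∈ s <;> by_cases h' : p.2 ∈ t <;> simp [h, h', Set.indicator]
    simp only [h2] at h1
    rw [integral_indicator (hs.prod ht)] at h1
    simp [Measure.real] at h1
    rwa [ENNReal.toReal_eq_toReal_iff' (measure_ne_top _ _) (measure_ne_top _ _)] at h1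
  rw [heq]
  exact key f g hf hg A B hA hB

theorem CIPaper.integral_resid {Ω : Type*} {m mΩ : MeasurableSpace Ω} (hm : m ≤ mΩ)
    (μ : Measure Ω) [IsProbabilityMeasure μ] (f g : Ω → ℝ) (hf : Measurable f) (hg : Measurable g)
    (A B : ℝ) (hA : ∀ x, |f x| ≤ A) (hB : ∀ y, |g y| ≤ B) :
    ∫ ω, (f ω - (μ[f | m]) ω) * (g ω - (μ[g | m]) ω) ∂μ =
      ∫ ω, f ω * g ω ∂μ - ∫ ω, (μ[f | m]) ω * (μ[g | m]) ω ∂μ := by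
  obtain ⟨ω₀⟩ : Nonempty Ω := nonempty_of_isProbabilityMeasure μ
  have hA0 : 0 ≤ A := (abs_nonneg _).trans (hA ω₀)
  have hB0 : 0 ≤ B := (abs_nonneg _).trans (hB ω₀)
  have bf : ∀ᵐ ω ∂μ, ‖(μ[f | m]) ω‖ ≤ A :=
    ae_bdd_abs_condExp_of_ae_bdd_abs (Eventually.of_forall hA)
  have bg : ∀ᵐ ω ∂μ, ‖(μ[g | m]) ω‖ ≤ B :=
    ae_bdd_abs_condExp_of_ae_bdd_abs (Eventually.of_forall hB)
  have mf : Integrable f μ := Integrable.of_bound hf.aestronglyMeasurable A (Eventually.of_forall hA)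
  have mg : Integrable g μ := Integrable.of_bound hg.aestronglyMeasurable B (Eventually.of_forall hB)
  have cf : Integrable (μ[f | m]) μ := integrable_condExp
  have cg : Integrable (μ[g | m]) μ := integrable_condExp
  have i1 : Integrable (fun ω => f ω * g ω) μ :=
    mg.bdd_mul hf.aestronglyMeasurable (Eventually.of_forall hA)
  have i2 : Integrable (fun ω => f ω * (μ[g | m]) ω) μ :=
    cg.bdd_mul hf.aestronglyMeasurable (Eventually.of_forall hA)
  have i3 : Integrable (fun ω => (μ[f | m]) ω * g ω) μ :=
    mg.bdd_mul cf.aestronglyMeasurable bf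
  have i4 : Integrable (fun ω => (μ[f | m]) ω * (μ[g | m]) ω) μ :=
    cg.bdd_mul cf.aestronglyMeasurable bf
  have e2 : ∫ ω, f ω * (μ[g | m]) ω ∂μ = ∫ ω, (μ[f | m]) ω * (μ[g | m]) ω ∂μ := by
    have := condExp_mul_of_stronglyMeasurable_right (μ := μ)
      (stronglyMeasurable_condExp (m := m) (f := g) (μ := μ)) i2 mf
    have h := integral_condExp hm (μ := μ) (f := f * μ[g | m])
    rw [integral_congr_ae this] at h
    exact h.symm
  have e3 : ∫ ω, (μ[f | m]) ω * g ω ∂μ = ∫ ω, (μ[f | m]) ω * (μ[g | m]) ω ∂μ := by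
    have := condExp_mul_of_stronglyMeasurable_left (μ := μ)
      (stronglyMeasurable_condExp (m := m) (f := f) (μ := μ)) i3 mg
    have h := integral_condExp hm (μ := μ) (f := μ[f | m] * g)
    rw [integral_congr_ae this] at h
    exact h.symm
  have e : ∀ ω, (f ω - (μ[f | m]) ω) * (g ω - (μ[g | m]) ω) =
      (f ω * g ω - f ω * (μ[g | m]) ω) - ((μ[f | m]) ω * g ω - (μ[f | m]) ω * (μ[g | m]) ω) := by
    intro ω; ring
  have i12 : Integrable (fun ω => f ω * g ω - f ω * (μ[g | m]) ω) μ := i1.sub i2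
  have i34 : Integrable (fun ω => (μ[f | m]) ω * g ω - (μ[f | m]) ω * (μ[g | m]) ω) μ := i3.sub i4
  simp only [e]
  rw [integral_sub i12 i34, integral_sub i1 i2, integral_sub i3 i4, e2, e3]
  ring


/-- `P_{XZY} = P_{Ẍ⊗Y|Z}` iff the witness function vanishes identically;
in particular if the two measures differ then `Δ` is not identically zero. -/
theorem statement_19
    (dx dy dz : ℕ) (hdx : 1 ≤ dx) (hdy : 1 ≤ dy) (hdz : 1 ≤ dz)
    {Ω : Type} [MeasurableSpace Ω] [StandardBorelSpace Ω] [Nonempty Ω]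
    (μ : Measure Ω) [IsProbabilityMeasure μ]
    (X : Ω → Fin dx → ℝ) (Z : Ω → Fin dz → ℝ) (Y : Ω → Fin dy → ℝ)
    (hX : Measurable X) (hZ : Measurable Z) (hY : Measurable Y)
    (kX : ((Fin dx → ℝ) × (Fin dz → ℝ)) → ((Fin dx → ℝ) × (Fin dz → ℝ)) → ℝ) (kY : (Fin dy → ℝ) → (Fin dy → ℝ) → ℝ)
    (hk : Assumption1 kX kY)
    (P2 : Measure (((Fin dx → ℝ) × (Fin dz → ℝ)) × (Fin dy → ℝ))) (hP2 : IsCondProdMeasure μ X Z Y P2) :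
    ((μ.map fun ω => ((X ω, Z ω), Y ω)) = P2 ↔
      ∀ (t1 : ((Fin dx → ℝ) × (Fin dz → ℝ))) (t2 : Fin dy → ℝ), witness μ kX kY X Z Y t1 t2 = 0) ∧
    ((μ.map fun ω => ((X ω, Z ω), Y ω)) ≠ P2 →
      ¬ ∀ (t1 : ((Fin dx → ℝ) × (Fin dz → ℝ))) (t2 : Fin dy → ℝ), witness μ kX kY X Z Y t1 t2 = 0) := by
  have main : (μ.map fun ω => ((X ω, Z ω), Y ω)) = P2 ↔
      ∀ (t1 : ((Fin dx → ℝ) × (Fin dz → ℝ))) (t2 : Fin dy → ℝ),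
        witness μ kX kY X Z Y t1 t2 = 0 := by
    have hXZ : Measurable fun ω => (X ω, Z ω) := hX.prodMk hZ
    have hXZY : Measurable fun ω => ((X ω, Z ω), Y ω) := hXZ.prodMk hY
    have hprob : IsProbabilityMeasure P2 := hP2.1
    have hprob1 : IsProbabilityMeasure (μ.map fun ω => ((X ω, Z ω), Y ω)) :=
      Measure.isProbabilityMeasure_map hXZY.aemeasurable
    obtain ⟨C, hC⟩ := hk.bounded
    have hne : ∃ a b c d, kX a b * kY c d ≠ 0 := by
      by_contra hcon
      push Not at hcon
      have h := hk.charac (Measure.dirac ((fun _ => 0, fun _ => 0), fun _ => 0))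
        (Measure.dirac ((fun _ => 1, fun _ => 0), fun _ => 0)) inferInstance inferInstance
        (fun t => by simp [meanEmbed, hcon])
      rw [MeasureTheory.dirac_eq_dirac_iff] at h
      have h1 := congrFun (congrArg (fun p => p.1.1) h) ⟨0, hdx⟩
      simp at h1
    obtain ⟨a, b, c, d, habcd⟩ := hne
    have hab : kX a b ≠ 0 := left_ne_zero_of_mul habcd
    have hcd : kY c d ≠ 0 := right_ne_zero_of_mul habcd
    have mX : ∀ t, Measurable (kX t) := by
      intro t
      have h1 : Continuous fun x => kX t x * kY c d :=
        hk.continuous.comp (by fun_prop : Continuous fun x => ((t, c), (x, d)))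
      have h2 : Continuous fun x => kX t x * kY c d * (kY c d)⁻¹ := h1.mul continuous_const
      simpa [hcd] using h2.measurable
    have mY : ∀ t, Measurable (kY t) := by
      intro t
      have h1 : Continuous fun x => kX a b * kY t x :=
        hk.continuous.comp (by fun_prop : Continuous fun x => ((a, t), (b, x)))
      have h2 : Continuous fun x => (kX a b)⁻¹ * (kX a b * kY t x) := continuous_const.mul h1
      simpa [hab] using h2.measurable
    have bX : ∀ t x, |kX t x| ≤ C / |kY c d| := by
      intro t x
      rw [le_div_iff₀ (abs_pos.mpr hcd), ← abs_mul]
      exact hC (t, c) (x, d)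
    have bY : ∀ t x, |kY t x| ≤ C / |kX a b| := by
      intro t x
      rw [le_div_iff₀ (abs_pos.mpr hab), ← abs_mul, mul_comm]
      exact hC (a, t) (b, x)
    have hw : ∀ t1 t2, witness μ kX kY X Z Y t1 t2 =
        ∫ p, kX t1 p.1 * kY t2 p.2 ∂(μ.map fun ω => ((X ω, Z ω), Y ω)) -
          ∫ p, kX t1 p.1 * kY t2 p.2 ∂P2 := by
      intro t1 t2
      have hmm : Measurable fun p : ((Fin dx → ℝ) × (Fin dz → ℝ)) × (Fin dy → ℝ) =>
          kX t1 p.1 * kY t2 p.2 :=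
        ((mX t1).comp measurable_fst).mul ((mY t2).comp measurable_snd)
      rw [integral_map hXZY.aemeasurable hmm.aestronglyMeasurable,
        integral_condProd μ X Z Y hX hZ hY P2 hP2 (kX t1) (kY t2) (mX t1) (mY t2) _ _
          (bX t1) (bY t2)]
      exact integral_resid hZ.comap_le μ (fun ω => kX t1 (X ω, Z ω)) (fun ω => kY t2 (Y ω))
        ((mX t1).comp hXZ) ((mY t2).comp hY) _ _ (fun _ => bX t1 _) (fun _ => bY t2 _)
    constructor
    · intro h t1 t2
      rw [hw, h, sub_self]
    · intro h
      apply hk.charac _ _ hprob1 hprob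
      intro t
      exact transpose_eq _ hk.posdef hk.continuous.measurable C hC _ _
        (fun s => by
          have := h s.1 s.2
          rw [hw] at this
          exact sub_eq_zero.mp this) t
  exact ⟨main, fun h h' => h (main.2 h')⟩
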